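/- If a d.c.e. real γ is covered by some Solovay test (i.e., γ is not Martin-Löf random), then γ has a d.c.e. approximation {c_s} such that either γ is rational or liminf_{s→∞} |(γ − c_{s+1})/(γ − c_s)| = 0; that is, γ is strongly d.c.e. 0-speedable. -/

import Mathlib

open Filter

/-- A computable approximation of a real `α`: a computable sequence of
rationals in `[0,1]` converging to `α`. -/
def IsCompApprox (a : ℕ → ℚ) (α : ℝ) : Prop :=
  Computable a ∧ (∀ s, a s ∈ Set.Icc (0 : ℚ) 1) ∧
    Tendsto (fun s => (a s : ℝ)) atTop (nhds α)

/-- A d.c.e. approximation: a computable approximation with bounded variation. -/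
def IsDCEApprox (a : ℕ → ℚ) (α : ℝ) : Prop :=
  IsCompApprox a α ∧ Summable (fun s => |(a (s + 1) : ℝ) - (a s : ℝ)|)

/-- A computable order: a nondecreasing unbounded computable function. -/
def IsComputableOrder (f : ℕ → ℕ) : Prop :=
  Computable f ∧ Monotone f ∧ Tendsto f atTop atTop

/-- The liminf (in the extended reals) of `|(α - a (f s)) / (α - a s)|`. -/
noncomputable def speedLiminf (a : ℕ → ℚ) (f : ℕ → ℕ) (α : ℝ) : EReal :=
  Filter.liminf (fun s => ((|(α - (a (f s) : ℝ)) / (α - (a s : ℝ))| : ℝ) : EReal)) atTop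

/-- A computable approximation `a` of `α` is `ρ`-speedable. -/
def IsRhoSpeedable (a : ℕ → ℚ) (α : ℝ) (ρ : ℚ) : Prop :=
  (∃ q : ℚ, α = (q : ℝ)) ∨
    ∃ f, IsComputableOrder f ∧ speedLiminf a f α ≤ (((ρ : ℝ) : EReal))

/-- A computable approximation is speedable if it is `ρ`-speedable for some rational
`ρ ∈ [0,1)`. -/
def IsSpeedable (a : ℕ → ℚ) (α : ℝ) : Prop :=
  ∃ ρ : ℚ, 0 ≤ ρ ∧ ρ < 1 ∧ IsRhoSpeedable a α ρ

/-- A Solovay test: computable sequences of rationals `l i ≤ r i` in `[0,1]`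
with `Σ (r i - l i) < ∞`. -/
structure SolovayTest where
  l : ℕ → ℚ
  r : ℕ → ℚ
  comp_l : Computable l
  comp_r : Computable r
  mem_l : ∀ i, l i ∈ Set.Icc (0 : ℚ) 1
  mem_r : ∀ i, r i ∈ Set.Icc (0 : ℚ) 1
  le : ∀ i, l i ≤ r i
  summable : Summable (fun i => (r i : ℝ) - (l i : ℝ))

/-- A real `γ` is covered by a Solovay test if `γ ∈ [l i, r i]` for infinitely many `i`. -/
def SolovayTest.Covers (T : SolovayTest) (γ : ℝ) : Prop :=
  ∃ᶠ i in atTop, γ ∈ Set.Icc (T.l i : ℝ) (T.r i : ℝ)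

/-- The sequence of endpoints `l 0, r 0, l 1, r 1, …` of a Solovay test. -/
def SolovayTest.endpoints (T : SolovayTest) (n : ℕ) : ℚ :=
  if n % 2 = 0 then T.l (n / 2) else T.r (n / 2)

/-!
Let `a` be a d.c.e. approximation of an irrational `γ`. If computable depths `δ N ≥ 0` are summable
while `δ N / |γ - a N|` is unbounded, then visiting `a N - δ N` just before each `a N` keeps the
variation finite, and the step from `a N - δ N` to `a N` divides the error by about
`δ N / |γ - a N|`.

To obtain such depths from a test covering `γ`, count along every chain of nested dyadic cells how
many test intervals have been hit: the mean of this count over all cells stays bounded, since the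
test has finite total length, while the count diverges along the cells of `γ`. Replacing a count
`n` by `⌊√n⌋²` does not increase it, but concentrates its growth into jumps, which are unbounded
along `γ`. The means of the jumps telescope, so the sum over all dyadic cells of jump times length
is finite. Let `δ N` be this product for the cell of `a N` at level `N.unpair.1` if it is visited
for the first time, and `0` otherwise. Then `δ` is summable, and every dyadic cell of `γ` is
eventually visited, at a distance from `γ` of at most its length.
-/

section Computability

open Encodable Denumerable

theorem computablePred_and {α : Type*} [Primcodable α] {p q : α → Prop} :
    ComputablePred p → ComputablePred q → ComputablePred fun a => p a ∧ q a
  | ⟨_, hp⟩, ⟨_, hq⟩ => Computable.computablePred <|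
      (Primrec.and.to_comp.comp hp hq).of_eq fun _ => by simp

theorem computablePred_eq {α β : Type*} [Primcodable α] [Primcodable β] {f g : α → β}
    (hf : Computable f) (hg : Computable g) : ComputablePred fun a => f a = g a := by
  classical
  exact Computable.computablePred <| (Primrec.eq (α := β)).decide.to_comp.comp hf hg

theorem computablePred_le {α : Type*} [Primcodable α] {f g : α → ℕ}
    (hf : Computable f) (hg : Computable g) : ComputablePred fun a => f a ≤ g a :=
  Computable.computablePred <| Primrec.nat_le.decide.to_comp.comp hf hg

theorem computable_ite {α σ : Type*} [Primcodable α] [Primcodable σ] {p : α → Prop}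
    [DecidablePred p] {f g : α → σ} (hp : ComputablePred p) (hf : Computable f)
    (hg : Computable g) : Computable fun a => if p a then f a else g a := by
  simpa [Bool.cond_decide] using hp.decide.cond hf hg

theorem computable_sum_range {α : Type*} [Primcodable α] {g : α → ℕ} {f : α → ℕ → ℕ}
    (hg : Computable g) (hf : Computable₂ f) :
    Computable fun a => ∑ i ∈ Finset.range (g a), f a i := by
  have hstep : Computable₂ fun (a : α) (p : ℕ × ℕ) => p.2 + f a p.1 :=
    Primrec.nat_add.to_comp.comp (Computable.snd.comp Computable.snd)
      (hf.comp Computable.fst (Computable.fst.comp Computable.snd))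
  refine (Computable.nat_rec hg (Computable.const 0) hstep).of_eq fun a => ?_
  induction g a with
  | zero => rfl
  | succ n ih => rw [Finset.sum_range_succ, ← ih]

theorem primrec_two_pow : Primrec fun n : ℕ => 2 ^ n := by
  refine (Primrec.nat_rec₁ 1 (Primrec.nat_mul.comp Primrec.snd (Primrec.const 2)).to₂).of_eq
    fun n => ?_
  induction n with
  | zero => rfl
  | succ n ih => rw [pow_succ, ← ih]

theorem computable_of_graph {α β : Type*} [Primcodable α] [Denumerable β] {f : α → β}
    (hf : ComputablePred fun p : α × β => f p.1 = p.2) : Computable f := by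
  classical
  have hex : ∀ a, ∃ n, f a = ofNat β n := fun a => ⟨encode (f a), (ofNat_encode _).symm⟩
  have hcomp : ComputablePred fun p : α × ℕ => f p.1 = ofNat β p.2 :=
    Computable.computablePred <| hf.decide.comp
      (Computable.fst.pair ((Computable.ofNat β).comp Computable.snd))
  exact ((Computable.ofNat β).comp (Computable.find hcomp hex)).of_eq fun a =>
    (Nat.find_spec (hex a)).symm

-- The coding of `ℤ` sends `n` to `2 * n` and `-(n + 1)` to `2 * n + 1`.
theorem natAbs_eq_encode_int (z : ℤ) : z.natAbs = (encode z + 1) / 2 := by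
  cases z with
  | ofNat n => exact (show n = (2 * n + 1) / 2 by lia)
  | negSucc n => exact (show n + 1 = (2 * n + 1 + 1) / 2 by lia)

theorem primrec_int_natAbs : Primrec Int.natAbs :=
  (Primrec.nat_div.comp (Primrec.succ.comp Primrec.encode) (Primrec.const 2)).of_eq fun z =>
    (natAbs_eq_encode_int z).symm

theorem primrec_int_natCast : Primrec ((↑) : ℕ → ℤ) :=
  Primrec.encode_iff.1 <| Primrec.nat_mul.comp (Primrec.const 2) Primrec.id

theorem primrec_int_toNat : Primrec Int.toNat := by
  refine (Primrec.ite (Primrec.eq.comp (primrec_int_natCast.comp primrec_int_natAbs) Primrec.id)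
    primrec_int_natAbs (Primrec.const 0)).of_eq fun z => ?_
  split_ifs <;> grind

theorem primrec_int_toNat_neg : Primrec fun z : ℤ => (-z).toNat :=
  (Primrec.nat_sub.comp primrec_int_natAbs primrec_int_toNat).of_eq fun z => by lia

theorem primrec_nat_gcd : Primrec₂ Nat.gcd := by
  have hmod : ∀ {f : ℕ × ℕ → ℕ}, Primrec f →
      PrimrecPred fun p : (ℕ × ℕ) × ℕ => p.2 ∣ f p.1 := fun hf =>
    (Primrec.eq.comp (Primrec.nat_mod.comp (hf.comp Primrec.fst) Primrec.snd)
      (Primrec.const 0)).of_eq fun p => (Nat.dvd_iff_mod_eq_zero ..).symm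
  have hdvd : PrimrecRel fun (p : ℕ × ℕ) d => d ∣ p.1 ∧ d ∣ p.2 :=
    (hmod Primrec.fst).and (hmod Primrec.snd)
  refine (Primrec.nat_findGreatest (Primrec.nat_add.comp Primrec.fst Primrec.snd) hdvd).of_eq
    fun ⟨m, n⟩ => Nat.findGreatest_eq_iff.2
      ⟨?_, fun _ => ⟨Nat.gcd_dvd_left m n, Nat.gcd_dvd_right m n⟩, fun d hlt hle hd => ?_⟩
  · rcases m.eq_zero_or_pos with rfl | hm
    · simp
    · exact (Nat.gcd_le_left n hm).trans (Nat.le_add_right m n)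
  · have hpos : 0 < m.gcd n := Nat.pos_of_ne_zero fun h0 => by
      obtain ⟨rfl, rfl⟩ := Nat.gcd_eq_zero_iff.1 h0
      exact absurd (hlt.trans_le hle) (by simp)
    exact hlt.not_ge (Nat.le_of_dvd hpos (Nat.dvd_gcd hd.1 hd.2))

theorem encode_ofEncodableOfInfinite {α : Type*} [Encodable α] [Infinite α]
    [DecidablePred (· ∈ Set.range (encode : α → ℕ))] (x : α) :
    @encode α (ofEncodableOfInfinite α).toEncodable x =
      ((List.range (encode x)).filter (· ∈ Set.range (encode : α → ℕ))).length := by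
  rw [← List.countP_eq_length_filter]
  have hdec : ‹DecidablePred (· ∈ Set.range (encode : α → ℕ))› = decidableRangeEncode α :=
    Subsingleton.elim _ _
  exact hdec ▸ rfl

-- The derived code of `x` is the rank of `encode x` among all codes, so `encode x` is found from it
-- by searching for the code with that rank.
theorem computable_encode_of_primrecPred_range {α : Type*} [Encodable α] [Infinite α]
    (hrange : PrimrecPred (· ∈ Set.range (encode : α → ℕ))) :
    letI := ofEncodableOfInfinite α
    letI := Primcodable.ofDenumerable α
    Computable (fun x : α => @encode α ‹Encodable α› x) := by
  classical
  let denum := ofEncodableOfInfinite α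
  let := Primcodable.ofDenumerable α
  have hcount : Primrec fun n : ℕ =>
      ((List.range n).filter (· ∈ Set.range (@encode α ‹Encodable α›))).length :=
    Primrec.list_length.comp ((Primrec.listFilter hrange).comp Primrec.list_range)
  refine computable_of_graph <| ComputablePred.of_eq (computablePred_and
    (computablePred_eq (hcount.to_comp.comp Computable.snd)
      (Computable.encode.comp Computable.fst))
    (hrange.comp Primrec.snd).computablePred) fun p => ?_
  constructor
  · rintro ⟨hn, x, hx⟩
    rw [← hx, ← encode_ofEncodableOfInfinite] at hn
    rw [← hx, @encode_injective α denum.toEncodable _ _ hn]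
  · intro h
    rw [← h]
    exact ⟨(encode_ofEncodableOfInfinite p.1).symm, p.1, rfl⟩

theorem encode_rat (q : ℚ) :
    @encode ℚ Rat.instEncodable q = Nat.pair (encode q.num) q.den := rfl

theorem mem_range_encode_rat (n : ℕ) :
    n ∈ Set.range (@encode ℚ Rat.instEncodable) ↔
      0 < n.unpair.2 ∧ (ofNat ℤ n.unpair.1).natAbs.gcd n.unpair.2 = 1 := by
  constructor
  · rintro ⟨q, rfl⟩
    rw [encode_rat, Nat.unpair_pair, ofNat_encode]
    exact ⟨q.pos, q.reduced⟩
  · rintro ⟨hpos, hcop⟩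
    refine ⟨⟨ofNat ℤ n.unpair.1, n.unpair.2, hpos.ne', hcop⟩, ?_⟩
    exact (congrArg₂ Nat.pair (encode_ofNat _) rfl).trans n.pair_unpair

theorem computable_encode_rat : Computable (@encode ℚ Rat.instEncodable) :=
  @computable_encode_of_primrecPred_range ℚ Rat.instEncodable inferInstance <| by
    have hnum : Primrec fun n : ℕ => (ofNat ℤ n.unpair.1).natAbs :=
      primrec_int_natAbs.comp ((Primrec.ofNat ℤ).comp (Primrec.fst.comp Primrec.unpair))
    have hden : Primrec fun n : ℕ => n.unpair.2 := Primrec.snd.comp Primrec.unpair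
    exact ((Primrec.nat_lt.comp (Primrec.const 0) hden).and
      (Primrec.eq.comp (primrec_nat_gcd.comp hnum hden) (Primrec.const 1))).of_eq
        fun n => (mem_range_encode_rat n).symm

theorem computable_rat_num : Computable Rat.num :=
  ((Computable.ofNat ℤ).comp
    (Computable.fst.comp (Computable.unpair.comp computable_encode_rat))).of_eq fun q => by
      rw [encode_rat, Nat.unpair_pair, ofNat_encode]

theorem computable_rat_den : Computable Rat.den :=
  (Computable.snd.comp (Computable.unpair.comp computable_encode_rat)).of_eq fun q => by
    rw [encode_rat, Nat.unpair_pair]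

theorem natCast_div_eq_rat_iff (q : ℚ) (m : ℕ) {n : ℕ} (hn : n ≠ 0) :
    (m / n : ℚ) = q ↔ (q.num.toNat : ℤ) = q.num ∧ q.num.toNat * n = m * q.den := by
  have hn' : (n : ℚ) ≠ 0 := Nat.cast_ne_zero.2 hn
  have hden : (q.den : ℚ) ≠ 0 := Nat.cast_ne_zero.2 q.den_ne_zero
  constructor
  · intro h
    have hnum : (q.num.toNat : ℤ) = q.num :=
      Int.toNat_of_nonneg (Rat.num_nonneg.2 (h ▸ by positivity))
    refine ⟨hnum, ?_⟩
    rw [← Rat.num_div_den q, div_eq_div_iff hn' hden, ← hnum] at h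
    exact_mod_cast h.symm
  · rintro ⟨hnum, h⟩
    rw [← Rat.num_div_den q, div_eq_div_iff hn' hden, ← hnum]
    exact_mod_cast h.symm

theorem computable_natCast_div {α : Type*} [Primcodable α] {f g : α → ℕ} (hf : Computable f)
    (hg : Computable g) (hg0 : ∀ a, g a ≠ 0) : Computable fun a => (f a / g a : ℚ) := by
  have hnum : Computable fun p : α × ℚ => p.2.num := computable_rat_num.comp Computable.snd
  have htoNat : Computable fun p : α × ℚ => p.2.num.toNat := primrec_int_toNat.to_comp.comp hnum
  refine computable_of_graph <| ComputablePred.of_eq (computablePred_and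
    (computablePred_eq (primrec_int_natCast.to_comp.comp htoNat) hnum)
    (computablePred_eq (Primrec.nat_mul.to_comp.comp htoNat (hg.comp Computable.fst))
      (Primrec.nat_mul.to_comp.comp (hf.comp Computable.fst)
        (computable_rat_den.comp Computable.snd))))
    fun p => (natCast_div_eq_rat_iff p.2 (f p.1) (hg0 p.1)).symm

theorem rat_natFloor_mul_natCast (q : ℚ) (n : ℕ) :
    ⌊q * n⌋₊ = q.num.toNat * n / q.den := by
  have h : q * n = ((q.num * n : ℤ) : ℚ) / q.den := by
    rw [Int.cast_mul, Int.cast_natCast, ← div_mul_eq_mul_div, Rat.num_div_den]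
  rw [← Int.floor_toNat, h, Rat.floor_intCast_div_natCast]
  obtain hnum | hnum := le_total 0 q.num
  · lift q.num to ℕ using hnum with k
    norm_cast
  · rw [Int.toNat_of_nonpos hnum, zero_mul, Nat.zero_div, Int.toNat_of_nonpos]
    exact Int.ediv_nonpos_of_nonpos_of_neg (by nlinarith) (by positivity)

theorem computable_rat_natFloor_mul_two_pow : Computable₂ fun (q : ℚ) (i : ℕ) => ⌊q * 2 ^ i⌋₊ :=
  (Primrec.nat_div.to_comp.comp
    (Primrec.nat_mul.to_comp.comp
      (primrec_int_toNat.to_comp.comp (computable_rat_num.comp Computable.fst))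
      (primrec_two_pow.to_comp.comp Computable.snd))
    (computable_rat_den.comp Computable.fst)).of_eq fun p => by
      exact_mod_cast (rat_natFloor_mul_natCast p.1 (2 ^ p.2)).symm

theorem rat_max_zero_sub_eq (p q : ℚ) :
    max 0 (p - q) =
      ((p.num.toNat * q.den + (-q.num).toNat * p.den -
        (q.num.toNat * p.den + (-p.num).toNat * q.den) : ℕ) : ℚ) / (p.den * q.den : ℕ) := by
  have hnum : ∀ x : ℚ, x * x.den = x.num.toNat - (-x.num).toNat := fun x => by
    rw [Rat.mul_den_eq_num]
    exact_mod_cast (Int.toNat_sub_toNat_neg x.num).symm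
  have hden : (0 : ℚ) < (p.den * q.den : ℕ) := Nat.cast_pos.2 (Nat.mul_pos p.pos q.pos)
  have hcast : ∀ a b : ℕ, ((a - b : ℕ) : ℚ) = max 0 ((a : ℚ) - b) := fun a b => by
    rcases le_total a b with h | h
    · simp [h]
    · simp [h, Nat.cast_sub h]
  rw [hcast, eq_div_iff hden.ne', max_mul_of_nonneg _ _ hden.le, zero_mul]
  push_cast
  congr 1
  linear_combination (q.den : ℚ) * hnum p - (p.den : ℚ) * hnum q

theorem computable_rat_max_zero_sub : Computable₂ fun p q : ℚ => max 0 (p - q) := by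
  have hpos : Computable fun x : ℚ => x.num.toNat :=
    primrec_int_toNat.to_comp.comp computable_rat_num
  have hneg : Computable fun x : ℚ => (-x.num).toNat :=
    primrec_int_toNat_neg.to_comp.comp computable_rat_num
  have hcross : ∀ {u v : ℚ × ℚ → ℚ} {f g : ℚ → ℕ}, Computable u → Computable v → Computable f →
      Computable g → Computable fun p => f (u p) * g (v p) := fun hu hv hf hg =>
    Primrec.nat_mul.to_comp.comp (hf.comp hu) (hg.comp hv)
  have hfst : Computable (Prod.fst : ℚ × ℚ → ℚ) := Computable.fst
  have hsnd : Computable (Prod.snd : ℚ × ℚ → ℚ) := Computable.snd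
  refine (computable_natCast_div (Primrec.nat_sub.to_comp.comp
    (Primrec.nat_add.to_comp.comp
      (hcross hfst hsnd hpos computable_rat_den) (hcross hsnd hfst hneg computable_rat_den))
    (Primrec.nat_add.to_comp.comp
      (hcross hsnd hfst hpos computable_rat_den) (hcross hfst hsnd hneg computable_rat_den)))
    (hcross hfst hsnd computable_rat_den computable_rat_den)
    fun p => mul_ne_zero p.1.den_ne_zero p.2.den_ne_zero).of_eq
      fun p => (rat_max_zero_sub_eq p.1 p.2).symm

end Computability

section DyadicTelescoping

/-- The largest perfect square that is at most `n`. As a weight on multiplicities it is dominated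
by the identity, while its jumps are unbounded. -/
def squareFloor (n : ℕ) : ℕ := Nat.sqrt n ^ 2

theorem squareFloor_mono : Monotone squareFloor := fun _ _ h =>
  Nat.pow_le_pow_left (Nat.sqrt_le_sqrt h) 2

theorem squareFloor_le (n : ℕ) : squareFloor n ≤ n := Nat.sqrt_le' n

theorem le_squareFloor_sub {m a b : ℕ} (ha : a < m ^ 2) (hb : m ^ 2 ≤ b) :
    m ≤ squareFloor b - squareFloor a := by
  have hm : 0 < m := Nat.pos_of_ne_zero fun h => by simp [h] at ha
  obtain ⟨k, rfl⟩ := Nat.exists_eq_succ_of_ne_zero hm.ne'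
  have hsqrt_a : Nat.sqrt a ≤ k := Nat.lt_succ_iff.1 (Nat.sqrt_lt'.2 ha)
  have hsqrt_b : k + 1 ≤ Nat.sqrt b := Nat.le_sqrt'.2 hb
  have hlow : squareFloor a ≤ k ^ 2 := Nat.pow_le_pow_left hsqrt_a 2
  have hhigh : (k + 1) ^ 2 ≤ squareFloor b := Nat.pow_le_pow_left hsqrt_b 2
  grind

theorem computable_squareFloor : Computable squareFloor :=
  ((Primrec.nat_mul.comp Primrec.nat_sqrt Primrec.nat_sqrt).of_eq fun n =>
    (sq (Nat.sqrt n)).symm).to_comp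

variable (χ : ℕ → ℕ → ℕ)

/-- Writing `χ j k'` for the multiplicity with which test interval `j` hits the dyadic cell
`[k' / 2 ^ j, (k' + 1) / 2 ^ j)`, the total multiplicity collected along the ancestors of the cell
`k` of level `i`; the ancestor at level `j` is `k / 2 ^ (i - j)`. -/
def hitCount (i k : ℕ) : ℕ := ∑ j ∈ Finset.range i, χ j (k / 2 ^ (i - j))

/-- The increment of `squareFloor` along the hit count when passing cell `k` of level `i`. -/
def jump (i k : ℕ) : ℕ := squareFloor (hitCount χ i k + χ i k) - squareFloor (hitCount χ i k)

/-- The mean of `f` over the `2 ^ i` dyadic cells of level `i`. -/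
noncomputable def cellMean (i : ℕ) (f : ℕ → ℝ) : ℝ := (∑ k ∈ Finset.range (2 ^ i), f k) / 2 ^ i

variable {χ}

theorem hitCount_succ (i k : ℕ) :
    hitCount χ (i + 1) k = hitCount χ i (k / 2) + χ i (k / 2) := by
  rw [hitCount, Finset.sum_range_succ, hitCount, Nat.add_sub_cancel_left, pow_one]
  congr 1
  refine Finset.sum_congr rfl fun j hj => ?_
  rw [Nat.div_div_eq_div_mul, ← pow_succ', Nat.succ_sub (Finset.mem_range.1 hj).le]

theorem computable_hitCount (hχ : Computable₂ χ) : Computable₂ (hitCount χ) := by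
  have hancestor : Computable₂ fun (p : ℕ × ℕ) (j : ℕ) => p.2 / 2 ^ (p.1 - j) :=
    (Primrec.nat_div.comp (Primrec.snd.comp Primrec.fst) (primrec_two_pow.comp
      (Primrec.nat_sub.comp (Primrec.fst.comp Primrec.fst) Primrec.snd))).to_comp
  exact computable_sum_range Computable.fst (hχ.comp Computable.snd hancestor)

theorem computable_jump (hχ : Computable₂ χ) : Computable₂ (jump χ) :=
  have hcount : Computable fun p : ℕ × ℕ => hitCount χ p.1 p.2 := computable_hitCount hχ
  Primrec.nat_sub.to_comp.comp
    (computable_squareFloor.comp (Primrec.nat_add.to_comp.comp hcount hχ))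
    (computable_squareFloor.comp hcount)

theorem cellMean_mono (i : ℕ) {f g : ℕ → ℝ} (h : f ≤ g) : cellMean i f ≤ cellMean i g := by
  unfold cellMean
  gcongr with k
  exact h k

theorem cellMean_sub (i : ℕ) (f g : ℕ → ℝ) :
    cellMean i (fun k => f k - g k) = cellMean i f - cellMean i g := by
  rw [cellMean, Finset.sum_sub_distrib, sub_div, cellMean, cellMean]

theorem sum_range_two_mul {M : Type*} [AddCommMonoid M] (f : ℕ → M) (n : ℕ) :
    ∑ k ∈ Finset.range (2 * n), f k = ∑ k ∈ Finset.range n, (f (2 * k) + f (2 * k + 1)) := by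
  induction n with
  | zero => rfl
  | succ n ih =>
    rw [Finset.sum_range_succ, ← ih, Nat.mul_succ, Finset.sum_range_succ, Finset.sum_range_succ,
      add_assoc]

theorem cellMean_succ_div_two (i : ℕ) (f : ℕ → ℝ) :
    cellMean (i + 1) (fun k => f (k / 2)) = cellMean i f := by
  have hdiv : ∀ k, (2 * k + 1) / 2 = k := by lia
  simp only [cellMean, pow_succ', sum_range_two_mul, hdiv, Nat.mul_div_cancel_left _ two_pos,
    ← two_mul, ← Finset.mul_sum]
  exact mul_div_mul_left _ _ two_ne_zero

theorem cellMean_comp_hitCount_succ (w : ℕ → ℝ) (i : ℕ) :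
    cellMean (i + 1) (fun k => w (hitCount χ (i + 1) k)) =
      cellMean i (fun k => w (hitCount χ i k + χ i k)) := by
  simp only [hitCount_succ]
  exact cellMean_succ_div_two i fun k => w (hitCount χ i k + χ i k)

theorem sum_cellMean_comp_hitCount_sub (w : ℕ → ℝ) (hw : w 0 = 0) (n : ℕ) :
    ∑ i ∈ Finset.range n,
        cellMean i (fun k => w (hitCount χ i k + χ i k) - w (hitCount χ i k)) =
      cellMean n (fun k => w (hitCount χ n k)) := by
  simp only [cellMean_sub, ← cellMean_comp_hitCount_succ]
  rw [Finset.sum_range_sub fun i => cellMean i fun k => w (hitCount χ i k)]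
  simp [cellMean, hitCount, hw]

theorem sum_cellMean_jump_le (n : ℕ) :
    ∑ i ∈ Finset.range n, cellMean i (fun k => jump χ i k) ≤
      ∑ i ∈ Finset.range n, cellMean i (fun k => χ i k) := by
  have hjump : ∀ i k, (jump χ i k : ℝ) =
      squareFloor (hitCount χ i k + χ i k) - squareFloor (hitCount χ i k) := fun i k =>
    Nat.cast_sub (squareFloor_mono (Nat.le_add_right _ _))
  calc ∑ i ∈ Finset.range n, cellMean i (fun k => jump χ i k)
      = cellMean n (fun k => squareFloor (hitCount χ n k)) := by
        simp only [hjump]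
        exact sum_cellMean_comp_hitCount_sub (fun m => squareFloor m) (by simp [squareFloor]) n
    _ ≤ cellMean n (fun k => hitCount χ n k) :=
        cellMean_mono n fun k => Nat.cast_le.2 (squareFloor_le _)
    _ = ∑ i ∈ Finset.range n, cellMean i (fun k => χ i k) := by
        rw [← sum_cellMean_comp_hitCount_sub (fun m => m) Nat.cast_zero]
        simp only [Nat.cast_add, add_sub_cancel_left]

theorem cellMean_nonneg (i : ℕ) {f : ℕ → ℝ} (hf : 0 ≤ f) : 0 ≤ cellMean i f :=
  div_nonneg (Finset.sum_nonneg fun k _ => hf k) (by positivity)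

theorem summable_jump (hsupp : ∀ i k, 2 ^ i ≤ k → χ i k = 0)
    (hsum : Summable fun i => cellMean i (fun k => χ i k)) :
    Summable fun p : ℕ × ℕ => (jump χ p.1 p.2 : ℝ) / 2 ^ p.1 := by
  have hzero : ∀ i, ∀ k ∉ Finset.range (2 ^ i), (jump χ i k : ℝ) / 2 ^ i = 0 := fun i k hk => by
    simp [jump, hsupp i k (by simpa using hk)]
  have hinner : ∀ i, ∑' k, (jump χ i k : ℝ) / 2 ^ i = cellMean i (fun k => jump χ i k) :=
    fun i => by rw [tsum_eq_sum (hzero i), cellMean, Finset.sum_div]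
  refine (summable_prod_of_nonneg fun p => by positivity).2
    ⟨fun i => summable_of_ne_finset_zero (hzero i), ?_⟩
  simp only [hinner]
  refine summable_of_sum_range_le (c := ∑' i, cellMean i fun k => χ i k)
    (fun i => cellMean_nonneg i fun k => Nat.cast_nonneg _) fun n => ?_
  exact (sum_cellMean_jump_le n).trans
    (hsum.sum_le_tsum _ fun i _ => cellMean_nonneg i fun k => Nat.cast_nonneg _)

end DyadicTelescoping

section SolovayTestHits

/-- The multiplicity (`0` or `1`) with which the interval `[l i, r i]` of a Solovay test hits the
dyadic cell `[k / 2 ^ i, (k + 1) / 2 ^ i)` of the unit interval. -/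
def SolovayTest.hit (T : SolovayTest) (i k : ℕ) : ℕ :=
  if k < 2 ^ i ∧ ⌊T.l i * 2 ^ i⌋₊ ≤ k ∧ k ≤ ⌊T.r i * 2 ^ i⌋₊ then 1 else 0

theorem SolovayTest.computable_hit (T : SolovayTest) : Computable₂ T.hit := by
  have hfloor : ∀ {q : ℕ → ℚ}, Computable q → Computable fun p : ℕ × ℕ => ⌊q p.1 * 2 ^ p.1⌋₊ :=
    fun hq => computable_rat_natFloor_mul_two_pow.comp (hq.comp Computable.fst) Computable.fst
  exact computable_ite
    (computablePred_and
      (computablePred_le (Computable.succ.comp Computable.snd)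
        (primrec_two_pow.to_comp.comp Computable.fst))
      (computablePred_and (computablePred_le (hfloor T.comp_l) Computable.snd)
        (computablePred_le Computable.snd (hfloor T.comp_r))))
    (Computable.const 1) (Computable.const 0)

theorem SolovayTest.hit_eq_zero (T : SolovayTest) (i k : ℕ) (h : 2 ^ i ≤ k) : T.hit i k = 0 :=
  if_neg fun hk => hk.1.not_ge h

theorem natFloor_ratCast_mul_two_pow (q : ℚ) (i : ℕ) : ⌊(q : ℝ) * 2 ^ i⌋₊ = ⌊q * 2 ^ i⌋₊ := by
  rw [← Int.floor_toNat, ← Int.floor_toNat, ← Rat.floor_cast (α := ℝ) (q * 2 ^ i)]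
  norm_cast

theorem natFloor_mul_two_pow_lt {γ : ℝ} (hγ : γ ∈ Set.Ico (0 : ℝ) 1) (i : ℕ) :
    ⌊γ * 2 ^ i⌋₊ < 2 ^ i := by
  rw [Nat.floor_lt (by have := hγ.1; positivity)]
  push_cast
  exact mul_lt_of_lt_one_left (by positivity) hγ.2

theorem natFloor_mul_two_pow_succ_div_two (γ : ℝ) (i : ℕ) :
    ⌊γ * 2 ^ (i + 1)⌋₊ / 2 = ⌊γ * 2 ^ i⌋₊ := by
  rw [← Nat.floor_div_ofNat, pow_succ, ← mul_assoc]
  simp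

theorem SolovayTest.hit_natFloor_eq_one (T : SolovayTest) {γ : ℝ} (hγ : γ ∈ Set.Ico (0 : ℝ) 1)
    {i : ℕ} (hi : γ ∈ Set.Icc (T.l i : ℝ) (T.r i : ℝ)) : T.hit i ⌊γ * 2 ^ i⌋₊ = 1 := by
  refine if_pos ⟨natFloor_mul_two_pow_lt hγ i, ?_, ?_⟩
  · rw [← natFloor_ratCast_mul_two_pow]
    exact Nat.floor_mono (by gcongr; exact hi.1)
  · rw [← natFloor_ratCast_mul_two_pow]
    exact Nat.floor_mono (by gcongr; exact hi.2)

theorem SolovayTest.sum_hit_le (T : SolovayTest) (i : ℕ) :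
    ∑ k ∈ Finset.range (2 ^ i), T.hit i k ≤ ⌊T.r i * 2 ^ i⌋₊ + 1 - ⌊T.l i * 2 ^ i⌋₊ := by
  simp only [SolovayTest.hit, Finset.sum_boole, Nat.cast_id]
  rw [← Nat.card_Icc]
  exact Finset.card_le_card fun k hk => Finset.mem_Icc.2 (Finset.mem_filter.1 hk).2.2

theorem SolovayTest.cellMean_hit_le (T : SolovayTest) (i : ℕ) :
    cellMean i (fun k => T.hit i k) ≤ (T.r i - T.l i) + 2 * (1 / 2) ^ i := by
  have hl := (Nat.lt_floor_add_one (T.l i * 2 ^ i)).le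
  have hr := Nat.floor_le (a := T.r i * 2 ^ i) (mul_nonneg (T.mem_r i).1 (by positivity))
  have hfloor : ⌊T.l i * 2 ^ i⌋₊ ≤ ⌊T.r i * 2 ^ i⌋₊ + 1 :=
    (Nat.floor_mono (by gcongr; exact T.le i)).trans (Nat.le_succ _)
  have hsum : (∑ k ∈ Finset.range (2 ^ i), (T.hit i k : ℚ)) ≤
      ⌊T.r i * 2 ^ i⌋₊ + 1 - ⌊T.l i * 2 ^ i⌋₊ := by
    have := T.sum_hit_le i
    rw [Nat.le_sub_iff_add_le hfloor] at this
    rw [le_sub_iff_add_le]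
    exact_mod_cast this
  have hbound : (∑ k ∈ Finset.range (2 ^ i), (T.hit i k : ℚ)) ≤
      (T.r i - T.l i) * 2 ^ i + 2 := by linarith
  have hcancel : (1 / 2 : ℝ) ^ i * 2 ^ i = 1 := by
    rw [← mul_pow, one_div_mul_cancel two_ne_zero, one_pow]
  rw [cellMean, div_le_iff₀ (by positivity), add_mul, mul_assoc, hcancel, mul_one]
  exact_mod_cast hbound

theorem SolovayTest.summable_cellMean_hit (T : SolovayTest) :
    Summable fun i => cellMean i (fun k => T.hit i k) :=
  .of_nonneg_of_le (fun i => cellMean_nonneg i fun _ => Nat.cast_nonneg _) T.cellMean_hit_le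
    (T.summable.add (summable_geometric_two.mul_left 2))

theorem tendsto_atTop_of_frequently_lt_succ {n : ℕ → ℕ} (hn : Monotone n)
    (h : ∃ᶠ i in atTop, n i < n (i + 1)) : Tendsto n atTop atTop := by
  refine tendsto_atTop_atTop_of_monotone hn fun b => ?_
  induction b with
  | zero => exact ⟨0, Nat.zero_le _⟩
  | succ b ih =>
    obtain ⟨i, hi⟩ := ih
    obtain ⟨j, hij, hj⟩ := frequently_atTop.1 h i
    exact ⟨j + 1, (hi.trans (hn hij)).trans_lt hj⟩

theorem exists_ge_lt_and_le_succ {α : Type*} [LinearOrder α] {u : ℕ → α}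
    (hu : Tendsto u atTop atTop) {B : ℕ} {c : α} (hB : u B < c) :
    ∃ j ≥ B, u j < c ∧ c ≤ u (j + 1) := by
  by_contra! hstay
  obtain ⟨j, hBj, hj⟩ := ((eventually_ge_atTop B).and (hu.eventually_ge_atTop c)).exists
  exact hj.not_gt (Nat.le_induction hB (fun j hj ih => hstay j hj ih) j hBj)

theorem frequently_le_squareFloor_sub {n : ℕ → ℕ} (hn : Tendsto n atTop atTop) (m : ℕ) :
    ∃ᶠ i in atTop, m ≤ squareFloor (n (i + 1)) - squareFloor (n i) := by
  refine frequently_atTop.2 fun B => ?_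
  have hB : n B < (max m (n B + 1)) ^ 2 :=
    (Nat.lt_of_succ_le (le_max_right m (n B + 1))).trans_le (Nat.le_self_pow two_ne_zero _)
  obtain ⟨j, hBj, hlt, hle⟩ := exists_ge_lt_and_le_succ hn hB
  exact ⟨j, hBj, (le_max_left m _).trans (le_squareFloor_sub hlt hle)⟩

theorem hitCount_natFloor_succ (χ : ℕ → ℕ → ℕ) (γ : ℝ) (i : ℕ) :
    hitCount χ (i + 1) ⌊γ * 2 ^ (i + 1)⌋₊ =
      hitCount χ i ⌊γ * 2 ^ i⌋₊ + χ i ⌊γ * 2 ^ i⌋₊ := by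
  rw [hitCount_succ, natFloor_mul_two_pow_succ_div_two]

theorem SolovayTest.Covers.frequently_le_jump {T : SolovayTest} {γ : ℝ} (hT : T.Covers γ)
    (hγ : γ ∈ Set.Ico (0 : ℝ) 1) (m : ℕ) :
    ∃ᶠ i in atTop, m ≤ jump T.hit i ⌊γ * 2 ^ i⌋₊ := by
  have hsucc := hitCount_natFloor_succ T.hit γ
  have htop : Tendsto (fun i => hitCount T.hit i ⌊γ * 2 ^ i⌋₊) atTop atTop := by
    refine tendsto_atTop_of_frequently_lt_succ
      (monotone_nat_of_le_succ fun i => (hsucc i).symm ▸ Nat.le_add_right _ _)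
      (hT.mono fun i hi => ?_)
    rw [hsucc, T.hit_natFloor_eq_one hγ hi]
    exact Nat.lt_succ_self _
  refine (frequently_le_squareFloor_sub htop m).mono fun i hi => ?_
  rwa [hsucc] at hi

end SolovayTestHits

section FirstIndex

variable {β : Type*} [DecidableEq β]

/-- The least index at which the sequence `φ` takes the value `φ N`; `N` is a first visit of `φ`
when `firstIndex φ N = N`. -/
def firstIndex (φ : ℕ → β) (N : ℕ) : ℕ := Nat.find (p := fun M => φ M = φ N) ⟨N, rfl⟩

theorem apply_firstIndex (φ : ℕ → β) (N : ℕ) : φ (firstIndex φ N) = φ N :=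
  Nat.find_spec (p := fun M => φ M = φ N) ⟨N, rfl⟩

theorem firstIndex_congr {φ : ℕ → β} {M N : ℕ} (h : φ M = φ N) :
    firstIndex φ M = firstIndex φ N := by
  simp only [firstIndex, h]

theorem firstIndex_firstIndex (φ : ℕ → β) (N : ℕ) :
    firstIndex φ (firstIndex φ N) = firstIndex φ N :=
  firstIndex_congr (apply_firstIndex φ N)

theorem computable_firstIndex [Primcodable β] {φ : ℕ → β} (hφ : Computable φ) :
    Computable (firstIndex φ) :=
  Computable.find (P := fun N M => φ M = φ N)
    (computablePred_eq (hφ.comp Computable.snd) (hφ.comp Computable.fst)) _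

theorem summable_indicator_firstIndex {H : β → ℝ} (hH : Summable H) (φ : ℕ → β) :
    Summable ({N | firstIndex φ N = N}.indicator (H ∘ φ)) := by
  have hinj : Function.Injective fun N : {N | firstIndex φ N = N} => φ N := by
    rintro ⟨M, hM⟩ ⟨N, hN⟩ hMN
    exact Subtype.ext (hM.symm.trans ((firstIndex_congr hMN).trans hN))
  exact summable_subtype_iff_indicator.1 (hH.comp_injective hinj)

end FirstIndex

section CellVisits

/-- The dyadic cell of level `N.unpair.1` containing `a N`, given as its level and position. Every
level is looked at for infinitely many `N`. -/
def cellVisit (a : ℕ → ℚ) (N : ℕ) : ℕ × ℕ := (N.unpair.1, ⌊a N * 2 ^ N.unpair.1⌋₊)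

theorem computable_cellVisit {a : ℕ → ℚ} (ha : Computable a) : Computable (cellVisit a) :=
  have hlevel : Computable fun N : ℕ => N.unpair.1 := Computable.fst.comp Computable.unpair
  hlevel.pair (computable_rat_natFloor_mul_two_pow.comp ha hlevel)

theorem eventually_natFloor_eq {ι : Type*} {f : Filter ι} {u : ι → ℝ} {x : ℝ}
    (hu : Tendsto u f (nhds x)) (hx0 : 0 ≤ x) (hx : ∀ n : ℕ, x ≠ n) :
    ∀ᶠ N in f, ⌊u N⌋₊ = ⌊x⌋₊ := by
  have hlow : (⌊x⌋₊ : ℝ) < x := (Nat.floor_le hx0).lt_of_ne (hx _).symm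
  filter_upwards [hu.eventually (lt_mem_nhds hlow),
    hu.eventually (gt_mem_nhds (Nat.lt_floor_add_one x))] with N hN hN'
  exact (Nat.floor_eq_iff ((Nat.cast_nonneg _).trans hN.le)).2 ⟨hN.le, hN'⟩

theorem exists_firstVisit {γ : ℝ} (hγ0 : 0 ≤ γ) (hγ : Irrational γ) {a : ℕ → ℚ}
    (ha : Tendsto (fun N => (a N : ℝ)) atTop (nhds γ)) (i : ℕ) :
    ∃ N ≥ i, firstIndex (cellVisit a) N = N ∧ cellVisit a N = (i, ⌊γ * 2 ^ i⌋₊) := by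
  have hirr : Irrational (γ * 2 ^ i) := by
    exact_mod_cast hγ.mul_natCast (m := 2 ^ i) (by positivity)
  obtain ⟨N₀, hN₀⟩ := eventually_atTop.1
    (eventually_natFloor_eq (ha.mul_const (2 ^ i)) (by positivity) hirr.ne_nat)
  have hvisit : cellVisit a (Nat.pair i N₀) = (i, ⌊γ * 2 ^ i⌋₊) := by
    rw [cellVisit, Nat.unpair_pair, ← natFloor_ratCast_mul_two_pow,
      hN₀ _ (Nat.right_le_pair i N₀)]
  have hfirst := (apply_firstIndex (cellVisit a) (Nat.pair i N₀)).trans hvisit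
  refine ⟨firstIndex (cellVisit a) (Nat.pair i N₀), ?_, firstIndex_firstIndex _ _, hfirst⟩
  calc i = (firstIndex (cellVisit a) (Nat.pair i N₀)).unpair.1 := congrArg Prod.fst hfirst.symm
    _ ≤ _ := Nat.unpair_left_le _

theorem abs_sub_le_of_natFloor_eq {x y : ℝ} (hx : 0 ≤ x) (hy : 0 ≤ y) {i : ℕ}
    (h : ⌊x * 2 ^ i⌋₊ = ⌊y * 2 ^ i⌋₊) : |x - y| ≤ 1 / 2 ^ i := by
  have hfloor : ⌊x * 2 ^ i⌋ = ⌊y * 2 ^ i⌋ := by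
    rw [← Int.natCast_floor_eq_floor (by positivity), ← Int.natCast_floor_eq_floor (by positivity),
      h]
  have hpow : (0 : ℝ) < 2 ^ i := by positivity
  have hscaled := (Int.abs_sub_lt_one_of_floor_eq_floor hfloor).le
  rwa [← sub_mul, abs_mul, abs_of_pos hpow, ← le_div_iff₀ hpow] at hscaled

/-- The depth by which the approximation `a` is lowered at stage `N`: on the first visit of `a` to
a dyadic cell, the jump of the hit count there times the length of the cell. -/
def visitDepth (T : SolovayTest) (a : ℕ → ℚ) (N : ℕ) : ℚ :=
  if firstIndex (cellVisit a) N = N then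
    (jump T.hit (cellVisit a N).1 (cellVisit a N).2 : ℚ) / (2 ^ (cellVisit a N).1 : ℕ)
  else 0

theorem computable_visitDepth (T : SolovayTest) {a : ℕ → ℚ} (ha : Computable a) :
    Computable (visitDepth T a) :=
  have hvisit := computable_cellVisit ha
  computable_ite (computablePred_eq (computable_firstIndex hvisit) Computable.id)
    (computable_natCast_div ((computable_jump T.computable_hit).comp
        (Computable.fst.comp hvisit) (Computable.snd.comp hvisit))
      (primrec_two_pow.to_comp.comp (Computable.fst.comp hvisit)) fun _ => by positivity)
    (Computable.const 0)

theorem visitDepth_nonneg (T : SolovayTest) (a : ℕ → ℚ) (N : ℕ) : 0 ≤ visitDepth T a N := by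
  unfold visitDepth
  positivity

theorem summable_visitDepth (T : SolovayTest) (a : ℕ → ℚ) :
    Summable fun N => (visitDepth T a N : ℝ) := by
  refine (summable_indicator_firstIndex (summable_jump T.hit_eq_zero T.summable_cellMean_hit)
    (cellVisit a)).congr fun N => ?_
  simp only [visitDepth, Set.indicator_apply, Set.mem_ofPred_eq, Function.comp_apply]
  split_ifs <;> push_cast <;> rfl

theorem frequently_mul_abs_sub_le_visitDepth {T : SolovayTest} {γ : ℝ} (hT : T.Covers γ)
    (hγ : γ ∈ Set.Ico (0 : ℝ) 1) (hirr : Irrational γ) {a : ℕ → ℚ} (ha0 : ∀ N, 0 ≤ a N)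
    (ha : Tendsto (fun N => (a N : ℝ)) atTop (nhds γ)) (m : ℕ) :
    ∃ᶠ N in atTop, m * |γ - a N| ≤ visitDepth T a N := by
  refine frequently_atTop.2 fun B => ?_
  obtain ⟨i, hBi, hjump⟩ := frequently_atTop.1 (hT.frequently_le_jump hγ m) B
  obtain ⟨N, hiN, hfirst, hvisit⟩ := exists_firstVisit hγ.1 hirr ha i
  have hlevel : N.unpair.1 = i := congrArg Prod.fst hvisit
  have hcell : ⌊a N * 2 ^ i⌋₊ = ⌊γ * 2 ^ i⌋₊ := hlevel ▸ congrArg Prod.snd hvisit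
  have hdist : |γ - a N| ≤ 1 / 2 ^ i := abs_sub_le_of_natFloor_eq hγ.1 (Rat.cast_nonneg.2 (ha0 N))
    (hcell.symm.trans (natFloor_ratCast_mul_two_pow (a N) i).symm)
  refine ⟨N, hBi.trans hiN, ?_⟩
  calc (m : ℝ) * |γ - a N| ≤ jump T.hit i ⌊γ * 2 ^ i⌋₊ * (1 / 2 ^ i) := by gcongr
    _ = visitDepth T a N := by
      rw [visitDepth, if_pos hfirst, hvisit]
      push_cast
      exact mul_one_div _ _

end CellVisits

section Dips

/-- The sequence `a 0 - δ 0, a 0, a 1 - δ 1, a 1, …`, where negative values are replaced by `0` so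
as to stay in the unit interval. -/
def dip (a δ : ℕ → ℚ) (s : ℕ) : ℚ :=
  if s % 2 = 0 then max 0 (a (s / 2) - δ (s / 2)) else a (s / 2)

variable {a δ : ℕ → ℚ}

theorem dip_two_mul (a δ : ℕ → ℚ) (N : ℕ) : dip a δ (2 * N) = max 0 (a N - δ N) := by
  simp [dip]

theorem dip_two_mul_add_one (a δ : ℕ → ℚ) (N : ℕ) : dip a δ (2 * N + 1) = a N := by
  rw [dip, if_neg (by lia), show (2 * N + 1) / 2 = N by lia]

theorem computable_dip (ha : Computable a) (hδ : Computable δ) : Computable (dip a δ) :=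
  have hhalf : Computable fun s : ℕ => s / 2 := Primrec.nat_div2.to_comp.of_eq fun s => s.div2_val
  computable_ite
    (computablePred_eq (Primrec.nat_mod.to_comp.comp Computable.id (Computable.const 2))
      (Computable.const 0))
    (computable_rat_max_zero_sub.comp (ha.comp hhalf) (hδ.comp hhalf)) (ha.comp hhalf)

theorem abs_dip_sub_le {s : ℕ} (ha : 0 ≤ a (s / 2)) (hδ : 0 ≤ δ (s / 2)) :
    |dip a δ s - a (s / 2)| ≤ δ (s / 2) := by
  unfold dip
  split_ifs <;> grind

theorem isCompApprox_dip {α : ℝ} (ha : IsCompApprox a α) (hδ : Computable δ) (hδ0 : ∀ N, 0 ≤ δ N)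
    (hδlim : Tendsto (fun N => (δ N : ℝ)) atTop (nhds 0)) : IsCompApprox (dip a δ) α := by
  obtain ⟨hcomp, hmem, hlim⟩ := ha
  have hhalf : Tendsto (fun s : ℕ => s / 2) atTop atTop := Nat.tendsto_div_const_atTop two_ne_zero
  refine ⟨computable_dip hcomp hδ, fun s => ?_, ?_⟩
  · have := hmem (s / 2)
    have := hδ0 (s / 2)
    unfold dip
    split_ifs <;> grind
  · have hdiff : Tendsto (fun s => (dip a δ s - a (s / 2) : ℝ)) atTop (nhds 0) :=
      squeeze_zero_norm (a := fun s => (δ (s / 2) : ℝ)) (fun s => by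
        rw [Real.norm_eq_abs]
        exact_mod_cast abs_dip_sub_le (hmem (s / 2)).1 (hδ0 (s / 2))) (hδlim.comp hhalf)
    simpa using hdiff.add (hlim.comp hhalf)

theorem isDCEApprox_dip {α : ℝ} (ha : IsDCEApprox a α) (hδ : Computable δ) (hδ0 : ∀ N, 0 ≤ δ N)
    (hδsum : Summable fun N => (δ N : ℝ)) : IsDCEApprox (dip a δ) α := by
  obtain ⟨happrox, hvar⟩ := ha
  refine ⟨isCompApprox_dip happrox hδ hδ0 hδsum.tendsto_atTop_zero, ?_⟩
  have hbound : ∀ N, |(dip a δ (2 * N) : ℝ) - a N| ≤ δ N := fun N => by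
    have h := abs_dip_sub_le (a := a) (δ := δ) (s := 2 * N) (happrox.2.1 _).1 (hδ0 _)
    rw [Nat.mul_div_cancel_left N two_pos] at h
    exact_mod_cast h
  have heven : Summable fun N => |(dip a δ (2 * N + 1) : ℝ) - dip a δ (2 * N)| := by
    refine .of_nonneg_of_le (fun _ => abs_nonneg _) (fun N => ?_) hδsum
    rw [dip_two_mul_add_one, abs_sub_comm]
    exact hbound N
  have hodd : Summable fun N => |(dip a δ (2 * N + 1 + 1) : ℝ) - dip a δ (2 * N + 1)| := by
    refine .of_nonneg_of_le (fun _ => abs_nonneg _) (fun N => ?_)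
      (((summable_nat_add_iff 1).2 hδsum).add hvar)
    rw [dip_two_mul_add_one, show 2 * N + 1 + 1 = 2 * (N + 1) by ring]
    exact (abs_sub_le _ (a (N + 1) : ℝ) _).trans (add_le_add (hbound (N + 1)) le_rfl)
  exact (HasSum.even_add_odd (f := fun s => |(dip a δ (s + 1) : ℝ) - dip a δ s|)
    heven.hasSum hodd.hasSum).summable

theorem abs_div_sub_sub_le {x y d m : ℝ} (hm : 0 < m) (h : (m + 1) * |x - y| ≤ d) :
    |(x - y) / (x - (y - d))| ≤ 1 / m := by
  have hgap : d - |x - y| ≤ |x - (y - d)| := by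
    have := neg_abs_le (x - y)
    have := le_abs_self (x - (y - d))
    linarith
  rw [abs_div]
  refine div_le_of_le_mul₀ (abs_nonneg _) (by positivity) ?_
  rw [one_div, ← div_eq_inv_mul, le_div_iff₀ hm]
  linarith

theorem liminf_coe_eq_zero_of_frequently_le {ι : Type*} {f : Filter ι} {u : ι → ℝ} (hu0 : 0 ≤ u)
    (hu : ∀ m : ℕ, ∃ᶠ s in f, u s ≤ 1 / (m + 1)) : liminf (fun s => (u s : EReal)) f = 0 := by
  refine le_antisymm (EReal.le_of_forall_lt_iff_le.1 fun z hz => ?_)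
    (le_liminf_of_le (by isBoundedDefault) (.of_forall fun s => EReal.coe_nonneg.2 (hu0 s)))
  obtain ⟨m, hm⟩ := exists_nat_one_div_lt (EReal.coe_pos.1 hz)
  exact liminf_le_of_frequently_le'
    ((hu m).mono fun s hs => EReal.coe_le_coe_iff.2 (hs.trans hm.le))

theorem liminf_dip_eq_zero {α : ℝ} (hα : 0 < α) (ha : Tendsto (fun N => (a N : ℝ)) atTop (nhds α))
    (hδlim : Tendsto (fun N => (δ N : ℝ)) atTop (nhds 0))
    (hδ : ∀ m : ℕ, ∃ᶠ N in atTop, m * |α - a N| ≤ δ N) :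
    liminf (fun s => ((|(α - (dip a δ (s + 1) : ℝ)) / (α - (dip a δ s : ℝ))| : ℝ) : EReal)) atTop
      = 0 := by
  refine liminf_coe_eq_zero_of_frequently_le (fun _ => abs_nonneg _) fun m => ?_
  have hdip : ∀ᶠ N in atTop, dip a δ (2 * N) = a N - δ N := by
    filter_upwards [hδlim.eventually_lt ha hα] with N hN
    rw [dip_two_mul, max_eq_right (sub_nonneg.2 (by exact_mod_cast hN.le))]
  refine (tendsto_id.const_mul_atTop' two_pos).frequently
    (((hδ (m + 2)).and_eventually hdip).mono fun N ⟨hN, hNdip⟩ => ?_)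
  simp only [id, dip_two_mul_add_one, hNdip, Rat.cast_sub]
  refine abs_div_sub_sub_le (by positivity) (hN.trans' (le_of_eq ?_))
  push_cast
  ring

end Dips

theorem nonrandom_dce_implies_strongly_zero_speedable (γ : ℝ)
    (hγ : γ ∈ Set.Ioo (0 : ℝ) 1)
    (hdce : ∃ a : ℕ → ℚ, IsDCEApprox a γ)
    (hcov : ∃ T : SolovayTest, T.Covers γ) :
    ∃ c : ℕ → ℚ, IsDCEApprox c γ ∧
      ((∃ q : ℚ, γ = (q : ℝ)) ∨
        Filter.liminf
          (fun s => ((|(γ - (c (s + 1) : ℝ)) / (γ - (c s : ℝ))| : ℝ) : EReal)) atTop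
          = (0 : EReal)) := by
  obtain ⟨a, ha⟩ := hdce
  obtain ⟨T, hT⟩ := hcov
  by_cases hrat : ∃ q : ℚ, γ = q
  · exact ⟨a, ha, Or.inl hrat⟩
  have hirr : Irrational γ := fun ⟨q, hq⟩ => hrat ⟨q, hq.symm⟩
  have ⟨⟨hcomp, hmem, hlim⟩, _⟩ := ha
  have hsum : Summable fun N => (visitDepth T a N : ℝ) := summable_visitDepth T a
  have hdeep : ∀ m : ℕ, ∃ᶠ N in atTop, m * |γ - a N| ≤ visitDepth T a N :=
    frequently_mul_abs_sub_le_visitDepth hT ⟨hγ.1.le, hγ.2⟩ hirr (fun N => (hmem N).1) hlim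
  exact ⟨dip a (visitDepth T a),
    isDCEApprox_dip ha (computable_visitDepth T hcomp) (visitDepth_nonneg T a) hsum,
    Or.inr (liminf_dip_eq_zero hγ.1 hlim hsum.tendsto_atTop_zero hdeep)⟩
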